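/- arXiv:2002.09388 — 4 statements merged into one kernel-verified Lean document; each statement's English description precedes it below -/
import Mathlib

section
/- For every γ = [[a,b],[c,d]] ∈ SL(2,ℤ) and every τ ∈ ℍ, the matrix Φ₁(τ) = [[(iπτ/6)E₂(τ)+1, τ],[(iπ/6)E₂(τ), 1]] satisfies the intertwining identity Φ₁(γ·τ) · [[(cτ+d)⁻¹, 0],[0, cτ+d]] = γ · Φ₁(τ), where on the right-hand side γ is regarded as a matrix in M₂(ℂ). -/
/-!
Write `j = cτ + d` and `g = (iπ/6) E₂`. Then `Φ₁(τ)` is the product of the upper unipotent matrix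
with entry `τ` and the lower unipotent matrix with entry `g(τ)`. The Möbius action is the one for
which `γ · [[1, τ], [0, 1]] = [[1, γ·τ], [0, 1]] · [[j⁻¹, 0], [c, j]]`, so that after cancelling the
upper unipotent factor the identity becomes one between lower triangular matrices. Its only
nontrivial entry is `g(γ·τ) = j² g(τ) + c j`, the quasimodularity of `E₂`.
-/

open Matrix Complex

noncomputable section

abbrev SL2Z := Matrix.SpecialLinearGroup (Fin 2) ℤ

/-- Möbius action of `SL(2,ℤ)` on the upper half plane, as a formula on `ℂ`. -/
def moebius (γ : SL2Z) (τ : ℂ) : ℂ :=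
  ((γ 0 0 : ℂ) * τ + (γ 0 1 : ℂ)) / ((γ 1 0 : ℂ) * τ + (γ 1 1 : ℂ))

/-- `γ ∈ SL(2,ℤ)` regarded as a matrix in `M₂(ℂ)`. -/
def toMatC (γ : SL2Z) : Matrix (Fin 2) (Fin 2) ℂ :=
  (γ : Matrix (Fin 2) (Fin 2) ℤ).map (Int.cast : ℤ → ℂ)

/-- σ₁(n), the sum of the divisors of `n`. -/
def sigma1 (n : ℕ) : ℕ := ∑ d ∈ n.divisors, d

/-- The weight 2 Eisenstein series `E₂(τ) = 1 - 24 ∑_{n ≥ 1} σ₁(n) e^{2πinτ}`. -/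
def E2 (τ : ℂ) : ℂ :=
  1 - 24 * ∑' n : ℕ, (sigma1 (n + 1) : ℂ) *
    Complex.exp (2 * (Real.pi : ℂ) * Complex.I * ((n : ℂ) + 1) * τ)

/-- `π` as a complex number. -/
def piC : ℂ := (Real.pi : ℂ)

/-- The matrix-valued modular form `f(τ)` of weight `-2`. -/
def fM (τ : ℂ) : Matrix (Fin 2) (Fin 2) ℂ := !![τ, -τ ^ 2; 1, -τ]

/-- The matrix-valued modular form `h(τ)` of weight `0`. -/
def hM (τ : ℂ) : Matrix (Fin 2) (Fin 2) ℂ :=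
  !![Complex.I * piC * τ / 3 * E2 τ + 1, -(Complex.I * piC * τ ^ 2 / 3) * E2 τ - 2 * τ;
     Complex.I * piC / 3 * E2 τ, -(Complex.I * piC * τ / 3) * E2 τ - 1]

/-- The matrix-valued modular form `e(τ)` of weight `2`. -/
def eM (τ : ℂ) : Matrix (Fin 2) (Fin 2) ℂ :=
  !![piC ^ 2 * τ / 36 * E2 τ ^ 2 - Complex.I * piC / 6 * E2 τ,
       -(piC ^ 2 * τ ^ 2 / 36) * E2 τ ^ 2 + Complex.I * piC * τ / 3 * E2 τ + 1;
     piC ^ 2 / 36 * E2 τ ^ 2,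
       -(piC ^ 2 * τ / 36) * E2 τ ^ 2 + Complex.I * piC / 6 * E2 τ]

/-- The matrix `Φ₁(τ)`. -/
def Phi1 (τ : ℂ) : Matrix (Fin 2) (Fin 2) ℂ :=
  !![Complex.I * piC * τ / 6 * E2 τ + 1, τ; Complex.I * piC / 6 * E2 τ, 1]

section Gauss

variable {K : Type*} [Field K]

lemma mul_upperUnipotent_eq (A : Matrix (Fin 2) (Fin 2) K) (z : K) (hj : A 1 0 * z + A 1 1 ≠ 0) :
    A * !![1, z; 0, 1] =
      !![1, (A 0 0 * z + A 0 1) / (A 1 0 * z + A 1 1); 0, 1] *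
        !![A.det / (A 1 0 * z + A 1 1), 0; A 1 0, A 1 0 * z + A 1 1] := by
  rw [A.det_fin_two]
  nth_rw 1 [A.eta_fin_two]
  simp only [mul_fin_two]
  congrm !![?_, ?_; ?_, ?_]
  · field_simp
    ring
  · rw [div_mul_cancel₀ _ hj]
    ring
  · ring
  · ring

lemma lowerUnipotent_mul_diagonal_eq (c g : K) {j : K} (hj : j ≠ 0) :
    !![1, 0; j ^ 2 * g + c * j, 1] * !![j⁻¹, 0; 0, j] = !![j⁻¹, 0; c, j] * !![1, 0; g, 1] := by
  simp only [mul_fin_two]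
  congrm !![?_, ?_; ?_, ?_] <;> field_simp <;> ring

end Gauss

section Modular

open UpperHalfPlane (denom denom_ne_zero)
open scoped UpperHalfPlane

lemma E2_coe_eq_eisensteinSeries_E2 (z : ℍ) : E2 z = EisensteinSeries.E2 z := by
  rw [E2, EisensteinSeries.E2_eq_tsum_cexp, tsum_pnat_eq_tsum_succ
    (f := fun n : ℕ ↦ (ArithmeticFunction.sigma 1 n : ℂ) * cexp (2 * Real.pi * I * z) ^ n)]
  congr! 4 with n
  rw [sigma1, ArithmeticFunction.sigma_one_apply, ← Complex.exp_nat_mul]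
  push_cast
  ring_nf

lemma moebius_coe_eq_coe_smul (γ : SL2Z) (z : ℍ) : moebius γ z = ↑(γ • z) := by
  rw [moebius, UpperHalfPlane.coe_specialLinearGroup_apply]
  simp only [algebraMap_int_eq, eq_intCast, ofReal_intCast]

lemma eisensteinSeries_E2_smul (γ : SL2Z) (z : ℍ) :
    EisensteinSeries.E2 (γ • z) =
      denom γ z ^ 2 * EisensteinSeries.E2 z - 6 * I / Real.pi * γ 1 0 * denom γ z := by
  have hj : denom γ z ≠ 0 := denom_ne_zero γ z
  have slash := congrFun (EisensteinSeries.E2_slash_action γ) z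
  rw [ModularForm.SL_slash_apply, _root_.zpow_neg, ← div_eq_mul_inv,
    div_eq_iff (zpow_ne_zero 2 hj)] at slash
  simp only [Pi.sub_apply, Pi.smul_apply, smul_eq_mul,
    EisensteinSeries.D2, riemannZeta_two, zpow_ofNat] at slash
  rw [slash]
  field_simp

/-- The multiple `(iπ/6) E₂` of `E₂`, which is the lower-left entry of `Phi1` and is normalized so
that its correction term under `γ` is `c (cτ + d)`. -/
def scaledE2 (τ : ℂ) : ℂ := I * piC / 6 * E2 τ

lemma scaledE2_moebius (γ : SL2Z) (z : ℍ) :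
    scaledE2 (moebius γ z) = denom γ z ^ 2 * scaledE2 z + γ 1 0 * denom γ z := by
  rw [scaledE2, scaledE2, moebius_coe_eq_coe_smul, E2_coe_eq_eisensteinSeries_E2,
    E2_coe_eq_eisensteinSeries_E2, eisensteinSeries_E2_smul, piC]
  field_simp
  linear_combination -6 * γ 1 0 * I_sq

lemma Phi1_eq_upperUnipotent_mul_lowerUnipotent (τ : ℂ) :
    Phi1 τ = !![1, τ; 0, 1] * !![1, 0; scaledE2 τ, 1] := by
  rw [Phi1, scaledE2, mul_fin_two]
  congrm !![?_, ?_; ?_, ?_] <;> ring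

lemma det_toMatC (γ : SL2Z) : (toMatC γ).det = 1 := by
  have hdet := (Int.castRingHom ℂ).map_det γ.1
  rw [γ.2, map_one] at hdet
  exact hdet.symm

lemma toMatC_mul_upperUnipotent (γ : SL2Z) (z : ℍ) :
    toMatC γ * !![1, (z : ℂ); 0, 1] =
      !![1, moebius γ z; 0, 1] * !![(denom γ z)⁻¹, 0; (γ 1 0 : ℂ), denom γ z] := by
  have gauss := mul_upperUnipotent_eq (toMatC γ) z (denom_ne_zero γ z)
  rwa [det_toMatC, one_div] at gauss

end Modular

/-- the intertwining identity
`Φ₁(γ·τ) · [[(cτ+d)⁻¹, 0],[0, cτ+d]] = γ · Φ₁(τ)`. -/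
theorem Phi1_intertwining (γ : SL2Z) (τ : ℂ) (hτ : 0 < τ.im) :
    Phi1 (moebius γ τ) *
        !![((γ 1 0 : ℂ) * τ + (γ 1 1 : ℂ))⁻¹, 0; 0, (γ 1 0 : ℂ) * τ + (γ 1 1 : ℂ)] =
      toMatC γ * Phi1 τ := by
  lift τ to UpperHalfPlane using hτ
  have hj := UpperHalfPlane.denom_ne_zero γ τ
  rw [← ModularGroup.denom_apply]
  set j := UpperHalfPlane.denom γ τ
  calc Phi1 (moebius γ τ) * !![j⁻¹, 0; 0, j]
    _ = !![1, moebius γ τ; 0, 1] *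
          (!![1, 0; j ^ 2 * scaledE2 τ + γ 1 0 * j, 1] * !![j⁻¹, 0; 0, j]) := by
      rw [Phi1_eq_upperUnipotent_mul_lowerUnipotent, scaledE2_moebius, Matrix.mul_assoc]
    _ = !![1, moebius γ τ; 0, 1] * !![j⁻¹, 0; (γ 1 0 : ℂ), j] * !![1, 0; scaledE2 τ, 1] := by
      rw [lowerUnipotent_mul_diagonal_eq _ _ hj, Matrix.mul_assoc]
    _ = toMatC γ * !![1, (τ : ℂ); 0, 1] * !![1, 0; scaledE2 τ, 1] := by
      rw [toMatC_mul_upperUnipotent]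
    _ = toMatC γ * Phi1 τ := by
      rw [Phi1_eq_upperUnipotent_mul_lowerUnipotent, Matrix.mul_assoc]

end
end

section
/- For every τ ∈ ℍ the matrices h(τ), e(τ), f(τ) form a standard sl₂-triple: [h(τ), e(τ)] = 2 e(τ), [h(τ), f(τ)] = −2 f(τ), and [e(τ), f(τ)] = h(τ), where [A,B] = AB − BA is the matrix commutator. -/
/-!
The matrix `Φ₁(τ)` has determinant `1`, and conjugation by it carries the constant triple
`H = !![1, 0; 0, -1]`, `E = !![0, 1; 0, 0]`, `F = !![0, 0; 1, 0]` to `h(τ)`, `e(τ)`, `f(τ)`. As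
conjugation is an automorphism of the Lie algebra of matrices, the commutation relations at `τ` are
those of `H`, `E`, `F`.
-/

open Matrix Complex

noncomputable section

theorem isSl2Triple_map {R L L' : Type*} [CommRing R] [LieRing L] [LieAlgebra R L]
    [LieRing L'] [LieAlgebra R L'] {φ : L →ₗ⁅R⁆ L'} (hφ : Function.Injective φ) {h e f : L}
    (t : IsSl2Triple h e f) : IsSl2Triple (φ h) (φ e) (φ f) where
  h_ne_zero := (map_ne_zero_iff φ hφ).mpr t.h_ne_zero
  lie_e_f := by rw [← LieHom.map_lie, t.lie_e_f]
  lie_h_e_nsmul := by rw [← LieHom.map_lie, t.lie_h_e_nsmul, map_nsmul]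
  lie_h_f_nsmul := by rw [← LieHom.map_lie, t.lie_h_f_nsmul, map_neg, map_nsmul]

attribute [local instance] LieRing.ofAssociativeRing

theorem isSl2Triple_matrix_conj {n R : Type*} [Fintype n] [DecidableEq n] [CommRing R]
    {h e f : Matrix n n R} (t : IsSl2Triple h e f) {P : Matrix n n R} (hP : IsUnit P.det) :
    IsSl2Triple (P * h * P⁻¹) (P * e * P⁻¹) (P * f * P⁻¹) := by
  let φ := P.lieConj (P.invertibleOfIsUnitDet hP)
  simpa only [LieEquiv.coe_toLieHom, φ, Matrix.lieConj_apply] using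
    isSl2Triple_map (φ := φ.toLieHom) φ.injective t

theorem isSl2Triple_fin_two (R : Type*) [CommRing R] [Nontrivial R] :
    IsSl2Triple (!![1, 0; 0, -1] : Matrix (Fin 2) (Fin 2) R) !![0, 1; 0, 0] !![0, 0; 1, 0] where
  h_ne_zero h := one_ne_zero (congr_fun₂ h 0 0)
  lie_e_f := by simp [Ring.lie_def]
  lie_h_e_nsmul := by simp [Ring.lie_def, one_add_one_eq_two]
  lie_h_f_nsmul := by simp [Ring.lie_def, sub_eq_add_neg, ← neg_add, one_add_one_eq_two]

theorem det_Phi1 (τ : ℂ) : (Phi1 τ).det = 1 := by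
  rw [Phi1, det_fin_two_of]
  ring

theorem inv_Phi1 (τ : ℂ) :
    (Phi1 τ)⁻¹ = !![1, -τ; -(I * piC / 6 * E2 τ), I * piC * τ / 6 * E2 τ + 1] := by
  rw [Matrix.inv_def, det_Phi1, Ring.inverse_one, one_smul, Phi1, adjugate_fin_two_of]

theorem hM_eq_conj (τ : ℂ) : hM τ = Phi1 τ * !![1, 0; 0, -1] * (Phi1 τ)⁻¹ := by
  rw [inv_Phi1, Phi1, hM, mul_fin_two, mul_fin_two]
  simp only [EmbeddingLike.apply_eq_iff_eq, vecCons_inj, and_true]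
  refine ⟨⟨?_, ?_⟩, ?_, ?_⟩ <;> ring

theorem eM_eq_conj (τ : ℂ) : eM τ = Phi1 τ * !![0, 1; 0, 0] * (Phi1 τ)⁻¹ := by
  have hsq : (I * piC / 6 * E2 τ) ^ 2 = -(piC ^ 2 / 36 * E2 τ ^ 2) := by
    linear_combination piC ^ 2 / 36 * E2 τ ^ 2 * I_sq
  rw [inv_Phi1, Phi1, eM, mul_fin_two, mul_fin_two]
  simp only [EmbeddingLike.apply_eq_iff_eq, vecCons_inj, and_true]
  refine ⟨⟨?_, ?_⟩, ?_, ?_⟩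
  · linear_combination τ * hsq
  · linear_combination -τ ^ 2 * hsq
  · linear_combination hsq
  · linear_combination -τ * hsq

theorem fM_eq_conj (τ : ℂ) : fM τ = Phi1 τ * !![0, 0; 1, 0] * (Phi1 τ)⁻¹ := by
  rw [inv_Phi1, Phi1, fM, mul_fin_two, mul_fin_two]
  simp only [EmbeddingLike.apply_eq_iff_eq, vecCons_inj, and_true]
  refine ⟨⟨?_, ?_⟩, ?_, ?_⟩ <;> ring

theorem isSl2Triple_hM_eM_fM (τ : ℂ) : IsSl2Triple (hM τ) (eM τ) (fM τ) := by
  rw [hM_eq_conj, eM_eq_conj, fM_eq_conj]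
  exact isSl2Triple_matrix_conj (isSl2Triple_fin_two ℂ) (by simp only [det_Phi1, isUnit_one])

/-- `(h(τ), e(τ), f(τ))` is a standard `sl₂`-triple for every `τ ∈ ℍ`. -/
theorem standard_sl2_triple (τ : ℂ) (hτ : 0 < τ.im) :
    hM τ * eM τ - eM τ * hM τ = (2 : ℂ) • eM τ ∧
    hM τ * fM τ - fM τ * hM τ = (-2 : ℂ) • fM τ ∧
    eM τ * fM τ - fM τ * eM τ = hM τ := by
  have t := isSl2Triple_hM_eM_fM τ
  simp only [← Ring.lie_def, neg_smul]
  exact ⟨t.lie_h_e_smul ℂ, t.lie_lie_smul_f ℂ, t.lie_e_f⟩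

end
end

section
/- In the Lie algebra of 2×2 matrices over ℂ[z,z⁻¹], define for k ∈ ℤ the matrices X_k = [[0, z^k],[z^{−k}, 0]] and G_m = (z^m − z^{−m})·[[1,0],[0,−1]] for m ∈ ℤ. Then for all integers k, ℓ, m, n the Onsager relations hold: [G_m, G_n] = 0, [G_m, X_k] = 2X_{k+m} − 2X_{k−m}, and [X_k, X_ℓ] = G_{k−ℓ}. -/
/-!
For a unit `u` put `D u = diag(u, u⁻¹)` and let `X u` be the antidiagonal matrix with entries
`u, u⁻¹`. These multiply as the rotations and reflections of a dihedral group: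
`D u D v = D (uv)`, `D u X v = X (uv)`, `X v D u = X (v/u)` and `X u X v = D (u/v)`.
Since `G u = D u - D u⁻¹`, each Onsager relation is the antisymmetrization of one of these rules,
and the relations of the theorem are the case `u = z^k`.
-/

open LaurentPolynomial

noncomputable section

/-- The Laurent polynomial ring `ℂ[z,z⁻¹]`. -/
abbrev Lau := LaurentPolynomial ℂ

/-- `X_k = [[0, z^k],[z^{−k}, 0]]`. -/
def X (k : ℤ) : Matrix (Fin 2) (Fin 2) Lau := !![0, T k; T (-k), 0]

/-- `G_m = (z^m − z^{−m})·[[1,0],[0,−1]]`. -/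
def G (m : ℤ) : Matrix (Fin 2) (Fin 2) Lau := !![T m - T (-m), 0; 0, -(T m - T (-m))]

section CommRing

variable {R : Type*} [CommRing R]

/-- The split torus `u ↦ diag(u, u⁻¹)` of `SL₂(R)`, as a homomorphism into the matrix ring. The
generators `onsagerG` are differences of its values. -/
def splitTorus : Rˣ →* Matrix (Fin 2) (Fin 2) R where
  toFun u := !![(u : R), 0; 0, ↑u⁻¹]
  map_one' := by simp [Matrix.one_fin_two]
  map_mul' u v := by simp [mul_comm]

/-- The Onsager generator `X_k` with the power `z^k` replaced by an arbitrary unit `u`. -/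
def onsagerX (u : Rˣ) : Matrix (Fin 2) (Fin 2) R := !![0, (u : R); ↑u⁻¹, 0]

/-- The Onsager generator `G_m` with the power `z^m` replaced by an arbitrary unit `u`, that is,
`(u - u⁻¹) · diag(1, -1)`. -/
def onsagerG (u : Rˣ) : Matrix (Fin 2) (Fin 2) R := splitTorus u - splitTorus u⁻¹

theorem splitTorus_mul_onsagerX (u v : Rˣ) : splitTorus u * onsagerX v = onsagerX (v * u) := by
  simp [splitTorus, onsagerX, mul_comm]

theorem onsagerX_mul_splitTorus (u v : Rˣ) : onsagerX v * splitTorus u = onsagerX (v / u) := by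
  simp [splitTorus, onsagerX, div_eq_mul_inv, mul_comm]

theorem onsagerX_mul_onsagerX (u v : Rˣ) : onsagerX u * onsagerX v = splitTorus (u / v) := by
  simp [splitTorus, onsagerX, div_eq_mul_inv, mul_comm]

theorem commute_splitTorus (u v : Rˣ) : Commute (splitTorus u) (splitTorus v) :=
  (Commute.all u v).map splitTorus

theorem commute_onsagerG (u v : Rˣ) : Commute (onsagerG u) (onsagerG v) :=
  .sub_left (.sub_right (commute_splitTorus _ _) (commute_splitTorus _ _))
    (.sub_right (commute_splitTorus _ _) (commute_splitTorus _ _))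

theorem lie_onsagerG_onsagerX (u v : Rˣ) :
    ⁅onsagerG u, onsagerX v⁆ = 2 • onsagerX (v * u) - 2 • onsagerX (v / u) := by
  have left_mul : onsagerG u * onsagerX v = onsagerX (v * u) - onsagerX (v / u) := by
    rw [onsagerG, sub_mul, splitTorus_mul_onsagerX, splitTorus_mul_onsagerX, ← div_eq_mul_inv]
  have right_mul : onsagerX v * onsagerG u = onsagerX (v / u) - onsagerX (v * u) := by
    rw [onsagerG, mul_sub, onsagerX_mul_splitTorus, onsagerX_mul_splitTorus, div_inv_eq_mul]
  rw [Ring.lie_def, left_mul, right_mul]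
  abel

theorem lie_onsagerX_onsagerX (u v : Rˣ) : ⁅onsagerX u, onsagerX v⁆ = onsagerG (u / v) := by
  rw [Ring.lie_def, onsagerX_mul_onsagerX, onsagerX_mul_onsagerX, onsagerG, inv_div]

theorem onsager_relations_general (u v a b : Rˣ) :
    ⁅onsagerG a, onsagerG b⁆ = 0 ∧
    ⁅onsagerG a, onsagerX u⁆ = 2 • onsagerX (u * a) - 2 • onsagerX (u / a) ∧
    ⁅onsagerX u, onsagerX v⁆ = onsagerG (u / v) :=
  ⟨(commute_onsagerG a b).lie_eq, lie_onsagerG_onsagerX a u, lie_onsagerX_onsagerX u v⟩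

end CommRing

/-- The monomial `z^k` as a unit of `ℂ[z,z⁻¹]`; the exponent is written multiplicatively so that
this is a group homomorphism. -/
def monomialUnit : Multiplicative ℤ →* Lauˣ := (AddMonoidAlgebra.of ℂ ℤ).toHomUnits

open Multiplicative (ofAdd)

theorem X_eq_onsagerX (k : ℤ) : X k = onsagerX (monomialUnit (ofAdd k)) := rfl

theorem G_eq_onsagerG (m : ℤ) : G m = onsagerG (monomialUnit (ofAdd m)) := by
  have coe_unit : (monomialUnit (ofAdd m) : Lau) = T m := rfl
  have coe_inv : (↑(monomialUnit (ofAdd m))⁻¹ : Lau) = T (-m) := rfl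
  simp [G, onsagerG, splitTorus, coe_unit, coe_inv]

/-- the Onsager relations `[G_m,G_n] = 0`, `[G_m,X_k] = 2X_{k+m} − 2X_{k−m}`
and `[X_k,X_ℓ] = G_{k−ℓ}`. -/
theorem onsager_relations (k l m n : ℤ) :
    G m * G n - G n * G m = 0 ∧
    G m * X k - X k * G m = (2 : ℂ) • X (k + m) - (2 : ℂ) • X (k - m) ∧
    X k * X l - X l * X k = G (k - l) := by
  simpa only [X_eq_onsagerX, G_eq_onsagerG, ofAdd_add, ofAdd_sub, map_mul, map_div,
    Ring.lie_def, ofNat_smul_eq_nsmul] using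
    onsager_relations_general (monomialUnit (ofAdd k)) (monomialUnit (ofAdd l))
      (monomialUnit (ofAdd m)) (monomialUnit (ofAdd n))

end
end

section
/- For every τ ∈ ℍ with Δ(τ) ≠ 0 the derivation δ = (1/(2πi))·(E₄E₆/Δ)·d/dτ acts on Klein's absolute invariant by δ(j) = −j(j − 1728); that is, (1/(2πi))·(E₄(τ)E₆(τ)/Δ(τ))·j′(τ) = −j(τ)(j(τ) − 1728), where j′ denotes the complex derivative of j. -/
open Complex

noncomputable section

/-- σ_k(n), the sum of the k-th powers of the divisors of `n`. -/
def sigmaN (k n : ℕ) : ℕ := ∑ d ∈ n.divisors, d ^ k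

/-- The normalized Eisenstein series of weight 4. -/
def E4 (τ : ℂ) : ℂ :=
  1 + 240 * ∑' n : ℕ, (sigmaN 3 (n + 1) : ℂ) *
    Complex.exp (2 * (Real.pi : ℂ) * Complex.I * ((n : ℂ) + 1) * τ)

/-- The normalized Eisenstein series of weight 6. -/
def E6 (τ : ℂ) : ℂ :=
  1 - 504 * ∑' n : ℕ, (sigmaN 5 (n + 1) : ℂ) *
    Complex.exp (2 * (Real.pi : ℂ) * Complex.I * ((n : ℂ) + 1) * τ)

/-- The modular discriminant `Δ = (E₄³ − E₆²)/1728`. -/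
def Δmod (τ : ℂ) : ℂ := (E4 τ ^ 3 - E6 τ ^ 2) / 1728

/-- Klein's absolute invariant `j = E₄³/Δ`. -/
def jmod (τ : ℂ) : ℂ := E4 τ ^ 3 / Δmod τ

/-!
With `D = (2πi)⁻¹ d/dτ`, the terms involving `E₂` in the transformation laws of `D E₄` and `D E₆`
cancel in the Rankin–Cohen bracket `4 E₄ D E₆ - 6 E₆ D E₄`, which is therefore a cusp form of
weight 12. The space of such forms is spanned by `Δ`, so comparing the coefficients of `q` shows
that the bracket is `-3456 Δ`. By the quotient rule this gives `D j = -E₄² E₆ / Δ`, and the claim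
follows from `j - 1728 = E₆² / Δ`.
-/

section

open Derivative EisensteinSeries Filter Function ModularForm
open UpperHalfPlane hiding I
open scoped Manifold MatrixGroups Topology

local notation "𝕢" => Periodic.qParam

section QExpansion

variable {h : ℝ} {f : ℍ → ℂ}

lemma deriv_qParam (h : ℝ) (z : ℂ) : deriv (𝕢 h) z = 2 * Real.pi * I / h * 𝕢 h z := by
  rw [← logDeriv_qParam h z, logDeriv_apply, div_mul_cancel₀ _ (Periodic.qParam_ne_zero z)]

lemma normalizedDerivOfComplex_eq_qParam_mul_deriv_cuspFunction (hh : h ≠ 0)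
    (hper : Periodic (f ∘ ofComplex) h) {z : ℍ}
    (hdiff : DifferentiableAt ℂ (cuspFunction h f) (𝕢 h z)) :
    D f z = (h : ℂ)⁻¹ * 𝕢 h z * deriv (cuspFunction h f) (𝕢 h z) := by
  have hcomp : f ∘ ofComplex = cuspFunction h f ∘ 𝕢 h :=
    funext fun w ↦ (Periodic.eq_cuspFunction hh hper w).symm
  rw [normalizedDerivOfComplex, hcomp,
    deriv_comp _ hdiff Periodic.differentiable_qParam.differentiableAt, deriv_qParam]
  field [two_pi_I_ne_zero]

lemma tendsto_atImInfty_qExpansion_coeff_zero (hh : 0 < h) (hper : Periodic (f ∘ ofComplex) h)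
    (hcont : ContinuousAt (cuspFunction h f) 0) :
    Tendsto f atImInfty (𝓝 ((qExpansion h f).coeff 0)) := by
  have hlim := hcont.tendsto.comp (qParam_tendsto_atImInfty hh)
  simpa [qExpansion_coeff] using hlim.congr fun z ↦ eq_cuspFunction z hh.ne' hper

lemma tendsto_atImInfty_normalizedDerivOfComplex_div_qParam (hh : 0 < h)
    (hper : Periodic (f ∘ ofComplex) h) (hanal : AnalyticAt ℂ (cuspFunction h f) 0) :
    Tendsto (fun z : ℍ ↦ D f z / 𝕢 h z) atImInfty (𝓝 ((h : ℂ)⁻¹ * (qExpansion h f).coeff 1)) := by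
  have hq := qParam_tendsto_atImInfty hh
  have hlim := (hanal.deriv.continuousAt.tendsto.comp hq).const_mul (h : ℂ)⁻¹
  simp only [qExpansion_coeff, Nat.factorial_one, Nat.cast_one, inv_one, one_mul, iteratedDeriv_one]
  refine hlim.congr' ?_
  filter_upwards [hq.eventually hanal.eventually_analyticAt] with z hz
  rw [normalizedDerivOfComplex_eq_qParam_mul_deriv_cuspFunction hh.ne' hper hz.differentiableAt,
    mul_right_comm, mul_div_cancel_right₀ _ (Periodic.qParam_ne_zero _), comp_apply]

end QExpansion

section RankinCohen

variable {k l : ℤ} {h : ℝ} {f g : ℍ → ℂ}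

/-- The first Rankin–Cohen bracket `[f, g] = k f D g - l g D f` of functions `f` and `g` that are
regarded as having weights `k` and `l`. -/
def rankinCohenBracket (k l : ℤ) (f g : ℍ → ℂ) : ℍ → ℂ :=
  (k : ℂ) • (f * D g) - (l : ℂ) • (g * D f)

lemma rankinCohenBracket_eq_serreDerivative (k l : ℤ) (f g : ℍ → ℂ) :
    rankinCohenBracket k l f g =
      (k : ℂ) • (f * serreDerivative l g) - (l : ℂ) • (g * serreDerivative k f) := by
  ext z
  simp only [rankinCohenBracket, serreDerivative_apply, Pi.sub_apply, Pi.smul_apply, Pi.mul_apply,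
    smul_eq_mul]
  ring

lemma rankinCohenBracket_slash (hf : MDiff f) (hg : MDiff g) (γ : SL(2, ℤ)) :
    rankinCohenBracket k l f g ∣[k + l + 2] γ =
      rankinCohenBracket k l (f ∣[k] γ) (g ∣[l] γ) := by
  have hfg : (f * serreDerivative l g) ∣[k + l + 2] γ =
      (f ∣[k] γ) * serreDerivative l (g ∣[l] γ) := by
    rw [add_assoc, mul_slash_SL2, serreDerivative_slash_equivariant hg]
  have hgf : (g * serreDerivative k f) ∣[k + l + 2] γ =
      (g ∣[l] γ) * serreDerivative k (f ∣[k] γ) := by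
    rw [add_comm k l, add_assoc, mul_slash_SL2, serreDerivative_slash_equivariant hf]
  simp only [rankinCohenBracket_eq_serreDerivative, sub_eq_add_neg, SlashAction.add_slash,
    SlashAction.neg_slash, SL_smul_slash, hfg, hgf]

lemma rankinCohenBracket_mdifferentiable (hf : MDiff f) (hg : MDiff g) :
    MDiff (rankinCohenBracket k l f g) :=
  ((hf.mul (normalizedDerivOfComplex_mdifferentiable hg)).const_smul (k : ℂ)).sub
    ((hg.mul (normalizedDerivOfComplex_mdifferentiable hf)).const_smul (l : ℂ))

lemma tendsto_atImInfty_rankinCohenBracket_div_qParam (hh : 0 < h)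
    (hfper : Periodic (f ∘ ofComplex) h) (hf : AnalyticAt ℂ (cuspFunction h f) 0)
    (hgper : Periodic (g ∘ ofComplex) h) (hg : AnalyticAt ℂ (cuspFunction h g) 0) :
    Tendsto (fun z : ℍ ↦ rankinCohenBracket k l f g z / 𝕢 h z) atImInfty
      (𝓝 (k * ((qExpansion h f).coeff 0 * ((h : ℂ)⁻¹ * (qExpansion h g).coeff 1)) -
        l * ((qExpansion h g).coeff 0 * ((h : ℂ)⁻¹ * (qExpansion h f).coeff 1)))) := by
  have hf₀ := tendsto_atImInfty_qExpansion_coeff_zero hh hfper hf.continuousAt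
  have hg₀ := tendsto_atImInfty_qExpansion_coeff_zero hh hgper hg.continuousAt
  have hf₁ := tendsto_atImInfty_normalizedDerivOfComplex_div_qParam hh hfper hf
  have hg₁ := tendsto_atImInfty_normalizedDerivOfComplex_div_qParam hh hgper hg
  refine (((hf₀.mul hg₁).const_mul (k : ℂ)).sub ((hg₀.mul hf₁).const_mul (l : ℂ))).congr fun z ↦ ?_
  simp only [rankinCohenBracket, Pi.sub_apply, Pi.smul_apply, Pi.mul_apply, smul_eq_mul]
  ring

lemma rankinCohenBracket_isZeroAtImInfty (hh : 0 < h)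
    (hfper : Periodic (f ∘ ofComplex) h) (hf : AnalyticAt ℂ (cuspFunction h f) 0)
    (hgper : Periodic (g ∘ ofComplex) h) (hg : AnalyticAt ℂ (cuspFunction h g) 0) :
    IsZeroAtImInfty (rankinCohenBracket k l f g) := by
  have hlim := (tendsto_atImInfty_rankinCohenBracket_div_qParam (k := k) (l := l)
    hh hfper hf hgper hg).mul (qParam_tendsto_atImInfty hh)
  rw [mul_zero] at hlim
  exact hlim.congr fun z ↦ div_mul_cancel₀ _ (Periodic.qParam_ne_zero _)

/-- The first Rankin–Cohen bracket of two modular forms of level one, as a cusp form. -/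
def rankinCohenCuspForm (f : ModularForm 𝒮ℒ k) (g : ModularForm 𝒮ℒ l) :
    CuspForm 𝒮ℒ (k + l + 2) :=
  have slash_eq (γ : SL(2, ℤ)) :
      rankinCohenBracket k l f g ∣[k + l + 2] γ = rankinCohenBracket k l f g := by
    rw [rankinCohenBracket_slash (ModularFormClass.holo f) (ModularFormClass.holo g),
      show (f : ℍ → ℂ) ∣[k] γ = f from f.slash_action_eq' _ ⟨γ, rfl⟩,
      show (g : ℍ → ℂ) ∣[l] γ = g from g.slash_action_eq' _ ⟨γ, rfl⟩]
  { toFun := rankinCohenBracket k l f g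
    slash_action_eq' := by
      rintro _ ⟨γ, rfl⟩
      exact slash_eq γ
    holo' := rankinCohenBracket_mdifferentiable (ModularFormClass.holo f)
      (ModularFormClass.holo g)
    zero_at_cusps' := by
      intro c hc
      rw [Subgroup.IsArithmetic.isCusp_iff_isCusp_SL2Z] at hc
      rw [OnePoint.isZeroAt_iff_forall_SL2Z hc]
      intro γ _
      rw [slash_eq]
      exact rankinCohenBracket_isZeroAtImInfty one_pos
        (SlashInvariantFormClass.periodic_comp_ofComplex f one_mem_strictPeriods_SL)
        (ModularFormClass.analyticAt_cuspFunction_zero f one_pos one_mem_strictPeriods_SL)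
        (SlashInvariantFormClass.periodic_comp_ofComplex g one_mem_strictPeriods_SL)
        (ModularFormClass.analyticAt_cuspFunction_zero g one_pos one_mem_strictPeriods_SL) }

end RankinCohen

lemma tendsto_atImInfty_discriminant_div_qParam :
    Tendsto (fun z : ℍ ↦ discriminant z / 𝕢 1 z) atImInfty (𝓝 1) :=
  tendsto_atImInfty_tprod_one_sub_eta_q_pow.congr fun z ↦ by
    rw [discriminant_eq_q_prod, mul_div_cancel_left₀ _ (Periodic.qParam_ne_zero _)]

lemma eq_mul_discriminant_of_tendsto_div_qParam (f : CuspForm 𝒮ℒ 12) {a : ℂ}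
    (hf : Tendsto (fun z : ℍ ↦ f z / 𝕢 1 z) atImInfty (𝓝 a)) (z : ℍ) :
    f z = a * discriminant z := by
  obtain ⟨c, rfl⟩ := CuspForm.exists_smul_discriminant_of_weight_eq_twelve f
  have hc : Tendsto (fun z : ℍ ↦ (c • CuspForm.discriminant) z / 𝕢 1 z) atImInfty (𝓝 (c * 1)) :=
    (tendsto_atImInfty_discriminant_div_qParam.const_mul c).congr fun z ↦
      (mul_div_assoc c (discriminant z) _).symm
  rw [tendsto_nhds_unique hf hc, mul_one]
  rfl

lemma rankinCohenBracket_E₄_E₆ (z : ℍ) :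
    rankinCohenBracket 4 6 E₄ E₆ z = -3456 * discriminant z := by
  refine eq_mul_discriminant_of_tendsto_div_qParam (rankinCohenCuspForm E₄ E₆) ?_ z
  have hlim := tendsto_atImInfty_rankinCohenBracket_div_qParam (k := 4) (l := 6) one_pos
    (SlashInvariantFormClass.periodic_comp_ofComplex E₄ one_mem_strictPeriods_SL)
    (ModularFormClass.analyticAt_cuspFunction_zero E₄ one_pos one_mem_strictPeriods_SL)
    (SlashInvariantFormClass.periodic_comp_ofComplex E₆ one_mem_strictPeriods_SL)
    (ModularFormClass.analyticAt_cuspFunction_zero E₆ one_pos one_mem_strictPeriods_SL)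
  rw [E₄_qExpansion_coeff_one, E₆_qExpansion_coeff_one, E_qExpansion_coeff_zero _ ⟨2, rfl⟩,
    E_qExpansion_coeff_zero _ ⟨3, rfl⟩] at hlim
  convert hlim using 2
  · rfl
  · norm_num

lemma E_eq_tsum_sigmaN {k : ℕ} (hk : 3 ≤ k) (hk2 : Even k) (z : ℍ) :
    E hk z = 1 - (2 * k / bernoulli k : ℂ) * ∑' n : ℕ, (sigmaN (k - 1) (n + 1) : ℂ) *
      cexp (2 * (Real.pi : ℂ) * I * ((n : ℂ) + 1) * z) := by
  rw [q_expansion_bernoulli hk hk2, tsum_pnat_eq_tsum_succ (f := fun n : ℕ ↦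
    (ArithmeticFunction.sigma (k - 1) n : ℂ) * cexp (2 * Real.pi * I * z) ^ (n : ℤ))]
  congr! 4 with n
  rw [sigmaN, ArithmeticFunction.sigma_apply, zpow_natCast, ← exp_nat_mul]
  congr 2
  push_cast
  ring

lemma E4_coe (z : ℍ) : E4 z = E₄ z := by
  rw [E_eq_tsum_sigmaN _ ⟨2, rfl⟩, E4, show bernoulli 4 = -1 / 30 by decide +kernel]
  norm_num

lemma E6_coe (z : ℍ) : E6 z = E₆ z := by
  rw [E_eq_tsum_sigmaN _ ⟨3, rfl⟩, E6, show bernoulli 6 = 1 / 42 by decide +kernel]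
  norm_num

lemma Δmod_coe (z : ℍ) : Δmod z = discriminant z := by
  rw [Δmod, E4_coe, E6_coe, discriminant_eq_E₄_cube_sub_E₆_sq]

lemma hasDerivAt_of_forall_coe_eq {F : ℂ → ℂ} {f : ℍ → ℂ} {z : ℍ} (hf : MDiffAt f z)
    (hF : ∀ w : ℍ, F w = f w) : HasDerivAt F (2 * Real.pi * I * D f z) z := by
  have hFf : F =ᶠ[𝓝 (z : ℂ)] f ∘ ofComplex := by
    filter_upwards [isOpen_upperHalfPlaneSet.mem_nhds z.im_pos] with w hw
    rw [comp_apply, ofComplex_apply_of_im_pos hw]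
    exact hF ⟨w, hw⟩
  rw [normalizedDerivOfComplex, mul_inv_cancel_left₀ two_pi_I_ne_zero]
  exact (mdifferentiableAt_iff.mp hf).hasDerivAt.congr_of_eventuallyEq hFf

lemma hasDerivAt_jmod {τ a b : ℂ} (hE4 : HasDerivAt E4 a τ) (hE6 : HasDerivAt E6 b τ)
    (hΔ : Δmod τ ≠ 0) :
    HasDerivAt jmod (E4 τ ^ 2 * E6 τ * (2 * E4 τ * b - 3 * E6 τ * a) / (1728 * Δmod τ ^ 2)) τ := by
  have hΔderiv : HasDerivAt Δmod ((3 * E4 τ ^ 2 * a - 2 * E6 τ * b) / 1728) τ :=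
    (((hE4.fun_pow 3).fun_sub (hE6.fun_pow 2)).div_const 1728).congr_deriv (by norm_num)
  refine ((hE4.fun_pow 3).fun_div hΔderiv hΔ).congr_deriv ?_
  have hcusp : E4 τ ^ 3 - E6 τ ^ 2 = 1728 * Δmod τ := by
    rw [Δmod, mul_div_cancel₀ _ (by norm_num)]
  field_simp
  push_cast
  linear_combination (-3 * E4 τ ^ 2 * a) * hcusp

lemma deriv_jmod (z : ℍ) :
    deriv jmod z = -(2 * Real.pi * I) * (E4 z ^ 2 * E6 z / Δmod z) := by
  have hE4 := hasDerivAt_of_forall_coe_eq (ModularFormClass.holo E₄ z) E4_coe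
  have hE6 := hasDerivAt_of_forall_coe_eq (ModularFormClass.holo E₆ z) E6_coe
  have hΔ : Δmod z ≠ 0 := Δmod_coe z ▸ discriminant_ne_zero z
  have hbracket : 4 * (E4 z * D E₆ z) - 6 * (E6 z * D E₄ z) = -3456 * Δmod z := by
    rw [E4_coe, E6_coe, Δmod_coe, ← rankinCohenBracket_E₄_E₆]
    simp [rankinCohenBracket]
  rw [(hasDerivAt_jmod hE4 hE6 hΔ).deriv]
  field_simp
  linear_combination (E4 z ^ 2 * E6 z / 2) * hbracket

lemma jmod_sub_1728 {τ : ℂ} (hΔ : Δmod τ ≠ 0) : jmod τ - 1728 = E6 τ ^ 2 / Δmod τ := by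
  rw [jmod, div_sub' hΔ, Δmod]
  ring

end

/-- STATEMENT 18: the derivation `δ = (1/2πi)(E₄E₆/Δ)d/dτ` acts on the `j`-invariant by
`δ(j) = −j(j−1728)`. -/
theorem delta_derivation_on_j (τ : ℂ) (hτ : 0 < τ.im) (hΔ : Δmod τ ≠ 0) :
    1 / (2 * (Real.pi : ℂ) * Complex.I) * (E4 τ * E6 τ / Δmod τ) * deriv jmod τ =
      -(jmod τ * (jmod τ - 1728)) := by
  have hderiv : deriv jmod τ = _ := deriv_jmod ⟨τ, hτ⟩
  rw [hderiv, jmod_sub_1728 hΔ, jmod]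
  field [two_pi_I_ne_zero]

end
end
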